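/- Let u be an AB-entropy solution of u_t + f(x,u)_x = 0 on ℝ × [0,∞), and let u_l(t) := u(0−,t), u_r(t) := u(0+,t) denote its one-sided traces at the interface x = 0. Then for almost every t > 0: f_l(u_l(t)) = f_r(u_r(t)) ≥ f_l(A) = f_r(B), and moreover if u_l(t) ≤ θ_l and u_r(t) ≥ θ_r then u_l(t) = A and u_r(t) = B. -/

import Mathlib

open MeasureTheory Set Filter

noncomputable section

/-- The discontinuous flux `f(x,u) = f_l(u)` for `x < 0`, `f_r(u)` for `x > 0`
(the value at the interface is taken to be `f_r(u)`). -/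
def dflux (fl fr : ℝ → ℝ) (x u : ℝ) : ℝ := if x < 0 then fl u else fr u

/-- The connection function `c^{AB}`. -/
def cAB (A B : ℝ) (x : ℝ) : ℝ := if x ≤ 0 then A else B

/-- An `AB`-entropy solution of `u_t + f(x,u)_x = 0` on `ℝ × [0,∞)` with
initial datum `u0`, for the flux `f(x,·) = fl` on `x<0` and `fr` on `x>0`,
relative to the connection `(A,B)`.  The structure bundles the solution `u`
(as a function of `(x,t)`), its one-sided spatial limits `um x t = u(x-,t)` and
`up x t = u(x+,t)` (for `t > 0`), the weak (distributional) formulation, the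
Kružkov entropy inequalities away from the interface, the `AB`-interface
entropy inequality, `L¹_loc`-continuity in time and the initial condition. -/
structure ABSol (fl fr : ℝ → ℝ) (A B : ℝ) (u0 : ℝ → ℝ) where
  u : ℝ → ℝ → ℝ
  meas : Measurable (Function.uncurry u)
  bdd : ∃ M : ℝ, ∀ x t, |u x t| ≤ M
  um : ℝ → ℝ → ℝ
  up : ℝ → ℝ → ℝ
  um_spec : ∀ x t, 0 < t →
    Tendsto (fun y => u y t) (nhdsWithin x (Iio x)) (nhds (um x t))
  up_spec : ∀ x t, 0 < t →
    Tendsto (fun y => u y t) (nhdsWithin x (Ioi x)) (nhds (up x t))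
  weak : ∀ φ : ℝ → ℝ → ℝ,
    ContDiff ℝ 1 (fun p : ℝ × ℝ => φ p.1 p.2) →
    HasCompactSupport (fun p : ℝ × ℝ => φ p.1 p.2) →
    (∀ x t, t ≤ 0 → φ x t = 0) →
    (∫ p : ℝ × ℝ, (u p.1 p.2 * deriv (fun s => φ p.1 s) p.2 +
        dflux fl fr p.1 (u p.1 p.2) * deriv (fun y => φ y p.2) p.1)) = 0
  kruzkov_l : ∀ (k : ℝ) (φ : ℝ → ℝ → ℝ),
    ContDiff ℝ 1 (fun p : ℝ × ℝ => φ p.1 p.2) →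
    HasCompactSupport (fun p : ℝ × ℝ => φ p.1 p.2) →
    (∀ x t, 0 ≤ φ x t) →
    (∀ x t, 0 ≤ x ∨ t ≤ 0 → φ x t = 0) →
    0 ≤ ∫ p : ℝ × ℝ, (|u p.1 p.2 - k| * deriv (fun s => φ p.1 s) p.2 +
        Real.sign (u p.1 p.2 - k) * (fl (u p.1 p.2) - fl k) *
          deriv (fun y => φ y p.2) p.1)
  kruzkov_r : ∀ (k : ℝ) (φ : ℝ → ℝ → ℝ),
    ContDiff ℝ 1 (fun p : ℝ × ℝ => φ p.1 p.2) →
    HasCompactSupport (fun p : ℝ × ℝ => φ p.1 p.2) →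
    (∀ x t, 0 ≤ φ x t) →
    (∀ x t, x ≤ 0 ∨ t ≤ 0 → φ x t = 0) →
    0 ≤ ∫ p : ℝ × ℝ, (|u p.1 p.2 - k| * deriv (fun s => φ p.1 s) p.2 +
        Real.sign (u p.1 p.2 - k) * (fr (u p.1 p.2) - fr k) *
          deriv (fun y => φ y p.2) p.1)
  interfaceEntropy : ∀ φ : ℝ → ℝ → ℝ,
    ContDiff ℝ 1 (fun p : ℝ × ℝ => φ p.1 p.2) →
    HasCompactSupport (fun p : ℝ × ℝ => φ p.1 p.2) →
    (∀ x t, 0 ≤ φ x t) →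
    (∀ x t, t ≤ 0 → φ x t = 0) →
    0 ≤ ∫ p : ℝ × ℝ, (|u p.1 p.2 - cAB A B p.1| * deriv (fun s => φ p.1 s) p.2 +
        Real.sign (u p.1 p.2 - cAB A B p.1) *
          (dflux fl fr p.1 (u p.1 p.2) - dflux fl fr p.1 (cAB A B p.1)) *
          deriv (fun y => φ y p.2) p.1)
  timeCont : ∀ (r t₀ : ℝ), 0 ≤ t₀ →
    Tendsto (fun t => ∫ x in Icc (-r) r, |u x t - u x t₀|)
      (nhdsWithin t₀ (Ici 0)) (nhds 0)
  init : ∀ᵐ x : ℝ ∂volume, u x 0 = u0 x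

/-- `AB`-genuine/interface characteristic for the `AB`-entropy solution `sol`,
on the time interval `[0,T]`, where `γ = f_l(A) = f_r(B)`. -/
def IsABgic (T : ℝ) (fl fr : ℝ → ℝ) (γ : ℝ) {A B : ℝ} {u0 : ℝ → ℝ}
    (sol : ABSol fl fr A B u0) (ζ : ℝ → ℝ) : Prop :=
  (∃ K : NNReal, LipschitzOnWith K ζ (Icc 0 T)) ∧
  (∀ᵐ t ∂(volume.restrict (Icc 0 T)),
    (ζ t < 0 → HasDerivAt ζ (deriv fl (sol.um (ζ t) t)) t ∧
      deriv fl (sol.um (ζ t) t) = deriv fl (sol.up (ζ t) t)) ∧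
    (0 < ζ t → HasDerivAt ζ (deriv fr (sol.um (ζ t) t)) t ∧
      deriv fr (sol.um (ζ t) t) = deriv fr (sol.up (ζ t) t)) ∧
    (ζ t = 0 → fl (sol.um 0 t) = γ ∧ fr (sol.up 0 t) = γ))

/-- `C(u,x)`: the set of `AB`-genuine/interface characteristics of `sol`
reaching `x` at time `T`. -/
def charSet (T : ℝ) (fl fr : ℝ → ℝ) (γ : ℝ) {A B : ℝ} {u0 : ℝ → ℝ}
    (sol : ABSol fl fr A B u0) (x : ℝ) : Set (ℝ → ℝ) :=
  {ζ | IsABgic T fl fr γ sol ζ ∧ ζ T = x}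

/-- `C₀(u,x)`: the set of initial positions `ζ(0)` of characteristics in `C(u,x)`. -/
def charSet0 (T : ℝ) (fl fr : ℝ → ℝ) (γ : ℝ) {A B : ℝ} {u0 : ℝ → ℝ}
    (sol : ABSol fl fr A B u0) (x : ℝ) : Set ℝ :=
  (fun ζ : ℝ → ℝ => ζ 0) '' charSet T fl fr γ sol x

/-- Membership in `L^∞(ℝ)`: measurable and (essentially) bounded. -/
def IsLinf (g : ℝ → ℝ) : Prop :=
  Measurable g ∧ ∃ M : ℝ, ∀ᵐ x : ℝ ∂volume, |g x| ≤ M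

/-- `ω ∈ A^{[AB]}(T)`: the profile `ω` is attainable at time `T`. -/
def Attainable (T : ℝ) (fl fr : ℝ → ℝ) (A B : ℝ) (ω : ℝ → ℝ) : Prop :=
  ∃ u0 : ℝ → ℝ, IsLinf u0 ∧
    ∃ sol : ABSol fl fr A B u0, ∀ᵐ x : ℝ ∂volume, sol.u x T = ω x

/-- `I_T^{[AB]}(ω)`: the set of (bounded) initial data whose `AB`-entropy
solution coincides a.e. with `ω` at time `T`. -/
def InitialSet (T : ℝ) (fl fr : ℝ → ℝ) (A B : ℝ) (ω : ℝ → ℝ) : Set (ℝ → ℝ) :=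
  {u0 | IsLinf u0 ∧
    ∃ sol : ABSol fl fr A B u0, ∀ᵐ x : ℝ ∂volume, sol.u x T = ω x}

/-- `x` is a point of continuity of `ω`: the one-sided limits exist and coincide. -/
def ContinuityPt (ω : ℝ → ℝ) (x : ℝ) : Prop :=
  ∃ l : ℝ, Tendsto ω (nhdsWithin x (Iio x)) (nhds l) ∧
    Tendsto ω (nhdsWithin x (Ioi x)) (nhds l)

/-!
Test an inequality `η_t + q_x ≤ 0` on `ℝ × (0,∞)` with `χ((x - x₀)/ε) ψ(t)`. After rescaling in `x`
the time term is `O(ε)`, while the space term converges to `χ(0) ∫ ψ (q_l - q_r)`, where `q_l`,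
`q_r` are the one-sided traces of `q` at `x₀`; hence `q_r ≤ q_l` for almost every `t > 0`.

Applied to `± (u, f(x,u))` at `x₀ = 0`, this is the Rankine–Hugoniot condition
`f_l(u_l) = f_r(u_r)`. Applied to the entropy pair of the connection, it gives, with
`γ = f_l(A) = f_r(B)`, `sgn(u_r - B) (f_r(u_r) - γ) ≤ sgn(u_l - A) (f_l(u_l) - γ)`. If the common
flux value were below `γ`, then `u_l > A` and `u_r < B` because `f_l` decreases on `(-∞, A]` and
`f_r` increases on `[B, ∞)`, so the left side would be positive and the right side negative. If
`u_l ≤ θ_l` and `u_r ≥ θ_r`, the same monotonicity gives `u_l ≤ A` and `u_r ≥ B`; now the left side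
is nonnegative and the right side nonpositive, so the flux equals `γ`, whence `u_l = A`, `u_r = B`.
-/

open scoped Topology ContDiff

lemma ae_nonneg_of_forall_integral_contDiff_mul_nonneg
    {E : Type*} [NormedAddCommGroup E] [NormedSpace ℝ E] [FiniteDimensional ℝ E]
    [MeasurableSpace E] [BorelSpace E] {μ : Measure E} [μ.IsAddHaarMeasure]
    {U : Set E} (hU : IsOpen U) {h : E → ℝ} (hh : LocallyIntegrable h μ)
    (H : ∀ ψ : E → ℝ, ContDiff ℝ ∞ ψ → HasCompactSupport ψ → tsupport ψ ⊆ U →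
      (∀ x, 0 ≤ ψ x) → 0 ≤ ∫ x, ψ x * h x ∂μ) :
    ∀ᵐ x ∂μ, x ∈ U → 0 ≤ h x := by
  let ρ (n : ℕ) : ContDiffBump (0 : E) :=
    ⟨1 / ((n : ℝ) + 1), 2 * (1 / ((n : ℝ) + 1)), by positivity,
      lt_mul_of_one_lt_left (by positivity) one_lt_two⟩
  have hρ : Tendsto (fun n ↦ (ρ n).rOut) atTop (𝓝 0) := by
    simpa [ρ] using (tendsto_one_div_add_atTop_nhds_zero_nat (𝕜 := ℝ)).const_mul 2
  filter_upwards [ContDiffBump.ae_convolution_tendsto_right_of_locallyIntegrable (K := 2) hρ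
    (Eventually.of_forall fun _ ↦ le_rfl) hh] with x hx hxU
  obtain ⟨r, hr, hrU⟩ := Metric.isOpen_iff.1 hU x hxU
  refine ge_of_tendsto hx ?_
  filter_upwards [hρ.eventually_lt_const hr] with n hn
  rw [convolution_eq_swap]
  refine H (fun y ↦ (ρ n).normed μ (x - y))
    ((ρ n).contDiff_normed.comp (contDiff_const.sub contDiff_id))
    ((ρ n).hasCompactSupport_normed.comp_homeomorph (Homeomorph.subLeft x)) ?_
    (fun _ ↦ (ρ n).nonneg_normed _)
  refine Subset.trans (fun y hy ↦ ?_) hrU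
  have hy' : x - y ∈ tsupport ((ρ n).normed μ) :=
    tsupport_comp_subset_preimage _ (Homeomorph.subLeft x).continuous hy
  rw [ContDiffBump.tsupport_normed_eq, mem_closedBall_zero_iff] at hy'
  rw [Metric.mem_ball, dist_comm, dist_eq_norm]
  exact hy'.trans_lt hn

lemma locallyIntegrable_indicator_of_tendsto {ι X E : Type*} [MeasurableSpace X]
    [TopologicalSpace X] {μ : Measure X} [IsLocallyFiniteMeasure μ] [NormedAddCommGroup E]
    {l : Filter ι} [l.NeBot] [l.IsCountablyGenerated] {s : Set X} (hs : MeasurableSet s)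
    {g : ι → X → E} {G : X → E} {C : ℝ} (hg : ∀ i, AEStronglyMeasurable (g i) μ)
    (hC : ∀ i x, ‖g i x‖ ≤ C) (hlim : ∀ x ∈ s, Tendsto (fun i ↦ g i x) l (𝓝 (G x))) :
    LocallyIntegrable (s.indicator G) μ := by
  have hlim' (x : X) : Tendsto (fun i ↦ s.indicator (g i) x) l (𝓝 (s.indicator G x)) := by
    by_cases hx : x ∈ s
    · simpa only [indicator_of_mem hx] using hlim x hx
    · simpa only [indicator_of_notMem hx] using tendsto_const_nhds
  refine (locallyIntegrable_const C).mono
    (aestronglyMeasurable_of_tendsto_ae l (fun i ↦ (hg i).indicator hs) (ae_of_all _ hlim'))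
    (ae_of_all _ fun x ↦ ?_)
  refine (le_of_tendsto' (hlim' x).norm fun i ↦ ?_).trans (le_abs_self C)
  exact (norm_indicator_le_norm_self _ _).trans (hC i x)

lemma tendsto_add_mul_nhdsGT (x₀ : ℝ) {y : ℝ} (hy : 0 < y) :
    Tendsto (fun ε : ℝ ↦ x₀ + ε * y) (𝓝[>] 0) (𝓝[>] x₀) := by
  refine tendsto_nhdsWithin_iff.2 ⟨Tendsto.mono_left ?_ nhdsWithin_le_nhds, ?_⟩
  · exact Continuous.tendsto' (by fun_prop) _ _ (by simp)
  · filter_upwards [self_mem_nhdsWithin] with ε (hε : 0 < ε)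
    exact lt_add_of_pos_right x₀ (mul_pos hε hy)

lemma tendsto_add_mul_nhdsLT (x₀ : ℝ) {y : ℝ} (hy : y < 0) :
    Tendsto (fun ε : ℝ ↦ x₀ + ε * y) (𝓝[>] 0) (𝓝[<] x₀) := by
  refine tendsto_nhdsWithin_iff.2 ⟨Tendsto.mono_left ?_ nhdsWithin_le_nhds, ?_⟩
  · exact Continuous.tendsto' (by fun_prop) _ _ (by simp)
  · filter_upwards [self_mem_nhdsWithin] with ε (hε : 0 < ε)
    exact add_lt_of_neg_right x₀ (mul_neg_of_pos_of_neg hε hy)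

lemma integral_prod_comp_add_mul_left {Y E : Type*} [MeasurableSpace Y] {ν : Measure Y}
    [SFinite ν] [NormedAddCommGroup E] [NormedSpace ℝ E] (F : ℝ × Y → E) (x₀ : ℝ) {ε : ℝ}
    (hε : ε ≠ 0) :
    ∫ p, F (x₀ + ε * p.1, p.2) ∂volume.prod ν = |ε⁻¹| • ∫ p, F p ∂volume.prod ν := by
  let e : ℝ ≃ₜ ℝ := (Homeomorph.mulLeft₀ ε hε).trans (Homeomorph.addLeft x₀)
  have he : Measure.map e volume = ENNReal.ofReal |ε⁻¹| • volume := by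
    have : (e : ℝ → ℝ) = (x₀ + ·) ∘ (ε * ·) := rfl
    rw [this, ← Measure.map_map (measurable_const_add x₀) (measurable_const_mul ε),
      Real.map_volume_mul_left hε, Measure.map_smul, map_add_left_eq_self]
  have hmap : Measure.map (Prod.map e id) (volume.prod ν) =
      ENNReal.ofReal |ε⁻¹| • volume.prod ν := by
    rw [← Measure.map_prod_map _ _ e.continuous.measurable measurable_id, he, Measure.map_id,
      Measure.prod_smul_left]
  calc ∫ p, F (x₀ + ε * p.1, p.2) ∂volume.prod ν
      = ∫ p, F p ∂Measure.map (Prod.map e id) (volume.prod ν) :=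
        ((e.measurableEmbedding.prodMap MeasurableEmbedding.id).integral_map F).symm
    _ = |ε⁻¹| • ∫ p, F p ∂volume.prod ν := by
        rw [hmap, integral_smul_measure, ENNReal.toReal_ofReal (abs_nonneg _)]

lemma integral_prod_ite_mul_deriv {Y : Type*} [MeasurableSpace Y] {ν : Measure Y} [SFinite ν]
    {χ : ℝ → ℝ} (hχ : ContDiff ℝ 1 χ) (hχc : HasCompactSupport χ) {v w : Y → ℝ}
    (hv : Integrable v ν) (hw : Integrable w ν) :
    ∫ p : ℝ × Y, (if p.1 ≤ 0 then v p.2 else w p.2) * deriv χ p.1 ∂volume.prod ν =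
      χ 0 * (∫ y, v y ∂ν - ∫ y, w y ∂ν) := by
  have hχ' : Integrable (deriv χ) :=
    (hχ.continuous_deriv le_rfl).integrable_of_hasCompactSupport hχc.deriv
  have hsplit (p : ℝ × Y) : (if p.1 ≤ 0 then v p.2 else w p.2) * deriv χ p.1 =
      (Iic 0).indicator (deriv χ) p.1 * v p.2 + (Ioi 0).indicator (deriv χ) p.1 * w p.2 := by
    rcases le_or_gt p.1 0 with hp | hp
    · simp [hp, hp.not_gt, mul_comm]
    · simp [hp, hp.not_ge, mul_comm]
  simp only [hsplit]
  rw [integral_add ((hχ'.indicator measurableSet_Iic).mul_prod hv)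
      ((hχ'.indicator measurableSet_Ioi).mul_prod hw),
    integral_prod_mul, integral_prod_mul, integral_indicator measurableSet_Iic,
    integral_indicator measurableSet_Ioi, hχc.integral_Iic_deriv_eq hχ,
    hχc.integral_Ioi_deriv_eq hχ]
  ring

/-- The inequality `η_t + q_x ≤ 0` in the sense of distributions on `ℝ × (0,∞)`; the support
condition on test functions is encoded, as in `ABSol`, by vanishing for `t ≤ 0`. -/
def HasNonposDivergence (η q : ℝ → ℝ → ℝ) : Prop :=
  ∀ φ : ℝ → ℝ → ℝ,
    ContDiff ℝ 1 (fun p : ℝ × ℝ ↦ φ p.1 p.2) →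
    HasCompactSupport (fun p : ℝ × ℝ ↦ φ p.1 p.2) →
    (∀ x t, 0 ≤ φ x t) →
    (∀ x t, t ≤ 0 → φ x t = 0) →
    0 ≤ ∫ p : ℝ × ℝ, (η p.1 p.2 * deriv (fun s ↦ φ p.1 s) p.2 +
      q p.1 p.2 * deriv (fun y ↦ φ y p.2) p.1)

section Traces

variable {η q : ℝ → ℝ → ℝ} {x₀ C D : ℝ} {ql qr χ ψ : ℝ → ℝ}

lemma HasNonposDivergence.integral_mul_nonneg (h : HasNonposDivergence η q)
    (hχ : ContDiff ℝ 1 χ) (hχc : HasCompactSupport χ) (hχ0 : ∀ x, 0 ≤ χ x)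
    (hψ : ContDiff ℝ 1 ψ) (hψc : HasCompactSupport ψ) (hψ0 : ∀ t, 0 ≤ ψ t)
    (hψz : ∀ t ≤ 0, ψ t = 0) :
    0 ≤ ∫ p : ℝ × ℝ, (η p.1 p.2 * (χ p.1 * deriv ψ p.2) +
      q p.1 p.2 * (deriv χ p.1 * ψ p.2)) := by
  have hsupp : HasCompactSupport fun p : ℝ × ℝ ↦ χ p.1 * ψ p.2 := by
    refine HasCompactSupport.intro (hχc.isCompact.prod hψc.isCompact) fun p hp ↦ ?_
    rw [mem_prod, not_and_or] at hp
    rcases hp with hp | hp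
    · rw [image_eq_zero_of_notMem_tsupport hp, zero_mul]
    · rw [image_eq_zero_of_notMem_tsupport hp, mul_zero]
  have := h (fun x t ↦ χ x * ψ t) ((hχ.comp contDiff_fst).mul (hψ.comp contDiff_snd)) hsupp
    (fun x t ↦ mul_nonneg (hχ0 x) (hψ0 t)) (fun x t ht ↦ by rw [hψz t ht, mul_zero])
  simpa only [deriv_const_mul_field', deriv_mul_const_field'] using this

lemma HasNonposDivergence.integral_rescale_nonneg (h : HasNonposDivergence η q)
    (hχ : ContDiff ℝ 1 χ) (hχc : HasCompactSupport χ) (hχ0 : ∀ x, 0 ≤ χ x)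
    (hψ : ContDiff ℝ 1 ψ) (hψc : HasCompactSupport ψ) (hψ0 : ∀ t, 0 ≤ ψ t)
    (hψz : ∀ t ≤ 0, ψ t = 0) {ε : ℝ} (hε : 0 < ε) :
    0 ≤ ∫ p : ℝ × ℝ, (ε * (η (x₀ + ε * p.1) p.2 * (χ p.1 * deriv ψ p.2)) +
      q (x₀ + ε * p.1) p.2 * (deriv χ p.1 * ψ p.2)) := by
  let χε (x : ℝ) : ℝ := χ (ε⁻¹ * (x - x₀))
  have hχε : ContDiff ℝ 1 χε := hχ.comp (contDiff_const.mul (contDiff_id.sub contDiff_const))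
  have hχεc : HasCompactSupport χε := hχc.comp_homeomorph
    ((Homeomorph.subRight x₀).trans (Homeomorph.mulLeft₀ ε⁻¹ (inv_ne_zero hε.ne')))
  have hχε_apply (y : ℝ) : χε (x₀ + ε * y) = χ y := by
    simp only [χε, add_sub_cancel_left, inv_mul_cancel_left₀ hε.ne']
  have hχε_deriv (y : ℝ) : ε * deriv χε (x₀ + ε * y) = deriv χ y := by
    have hcomp : (fun y ↦ χε (x₀ + ε * y)) = χ := funext hχε_apply
    rw [← hcomp]
    have := (hχε.differentiable one_ne_zero (x₀ + ε * y)).hasDerivAt.comp y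
      (((hasDerivAt_id y).const_mul ε).const_add x₀)
    rw [mul_comm]
    simpa [Function.comp_def] using this.deriv.symm
  have key := h.integral_mul_nonneg hχε hχεc (fun x ↦ hχ0 _) hψ hψc hψ0 hψz
  have hscaled := mul_nonneg hε.le (smul_nonneg (abs_nonneg ε⁻¹) key)
  rw [Measure.volume_eq_prod, ← integral_prod_comp_add_mul_left _ x₀ hε.ne',
    ← integral_const_mul] at hscaled
  refine hscaled.trans_eq (integral_congr_ae (ae_of_all _ fun p ↦ ?_))
  simp only [hχε_apply, ← hχε_deriv]
  ring

lemma integrable_trace_mul {l : Filter ℝ} [l.NeBot] [l.IsCountablyGenerated] {g : ℝ → ℝ}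
    (hqm : Measurable (Function.uncurry q)) (hqD : ∀ x t, |q x t| ≤ D)
    (hg : ∀ t, 0 < t → Tendsto (fun y ↦ q y t) l (𝓝 (g t)))
    (hψ : Continuous ψ) (hψc : HasCompactSupport ψ) (hψz : ∀ t ≤ 0, ψ t = 0) :
    Integrable fun t ↦ g t * ψ t := by
  have hloc : LocallyIntegrable ((Ioi 0).indicator g) :=
    locallyIntegrable_indicator_of_tendsto measurableSet_Ioi
      (fun x ↦ (hqm.comp measurable_prodMk_left).aestronglyMeasurable) hqD hg
  refine (hloc.integrable_smul_left_of_hasCompactSupport hψ hψc).congr (ae_of_all _ fun t ↦ ?_)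
  rcases le_or_gt t 0 with ht | ht
  · simp [hψz t ht]
  · simp [ht, mul_comm]

lemma tendsto_integral_rescale_mul_deriv
    (hqm : Measurable (Function.uncurry q)) (hqD : ∀ x t, |q x t| ≤ D)
    (hql : ∀ t, 0 < t → Tendsto (fun y ↦ q y t) (𝓝[<] x₀) (𝓝 (ql t)))
    (hqr : ∀ t, 0 < t → Tendsto (fun y ↦ q y t) (𝓝[>] x₀) (𝓝 (qr t)))
    (hχ : ContDiff ℝ 1 χ) (hχc : HasCompactSupport χ)
    (hψ : Continuous ψ) (hψc : HasCompactSupport ψ) (hψz : ∀ t ≤ 0, ψ t = 0) :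
    Tendsto (fun ε : ℝ ↦ ∫ p : ℝ × ℝ, q (x₀ + ε * p.1) p.2 * (deriv χ p.1 * ψ p.2)) (𝓝[>] 0)
      (𝓝 (χ 0 * ∫ t, ψ t * (ql t - qr t))) := by
  have hχ'ψ : Integrable fun p : ℝ × ℝ ↦ deriv χ p.1 * ψ p.2 :=
    ((hχ.continuous_deriv le_rfl).integrable_of_hasCompactSupport hχc.deriv).mul_prod
      (hψ.integrable_of_hasCompactSupport hψc)
  have hlψ : Integrable fun t ↦ ql t * ψ t := integrable_trace_mul hqm hqD hql hψ hψc hψz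
  have hrψ : Integrable fun t ↦ qr t * ψ t := integrable_trace_mul hqm hqD hqr hψ hψc hψz
  have hlimit : χ 0 * ∫ t, ψ t * (ql t - qr t) = ∫ p : ℝ × ℝ,
      (if p.1 ≤ 0 then ql p.2 * ψ p.2 else qr p.2 * ψ p.2) * deriv χ p.1 := by
    rw [Measure.volume_eq_prod, integral_prod_ite_mul_deriv hχ hχc hlψ hrψ,
      ← integral_sub hlψ hrψ]
    simp only [mul_comm (ψ _), sub_mul]
  rw [hlimit]
  refine tendsto_integral_filter_of_dominated_convergence
    (fun p ↦ D * ‖deriv χ p.1 * ψ p.2‖) (Eventually.of_forall fun ε ↦ ?_)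
    (Eventually.of_forall fun ε ↦ ae_of_all _ fun p ↦ ?_) (hχ'ψ.norm.const_mul D) ?_
  · have : Measurable fun p : ℝ × ℝ ↦ q (x₀ + ε * p.1) p.2 :=
      hqm.comp (f := fun p : ℝ × ℝ ↦ (x₀ + ε * p.1, p.2)) (by fun_prop)
    exact this.aestronglyMeasurable.mul hχ'ψ.aestronglyMeasurable
  · rw [norm_mul]
    exact mul_le_mul_of_nonneg_right (hqD _ _) (norm_nonneg _)
  · have hne : ∀ᵐ p : ℝ × ℝ, p.1 ≠ 0 := Measure.quasiMeasurePreserving_fst.ae (Measure.ae_ne _ 0)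
    filter_upwards [hne] with ⟨y, t⟩ hy
    rcases le_or_gt t 0 with ht | ht
    · simp [hψz t ht]
    simp only [mul_left_comm _ (deriv χ y), mul_comm _ (deriv χ y)]
    refine Tendsto.const_mul _ ?_
    rcases lt_or_gt_of_ne hy with hy | hy
    · rw [if_pos hy.le]
      exact ((hql t ht).comp (tendsto_add_mul_nhdsLT x₀ hy)).mul_const _
    · rw [if_neg hy.not_ge]
      exact ((hqr t ht).comp (tendsto_add_mul_nhdsGT x₀ hy)).mul_const _

lemma HasNonposDivergence.integral_mul_trace_sub_nonneg (h : HasNonposDivergence η q)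
    (hηm : Measurable (Function.uncurry η)) (hqm : Measurable (Function.uncurry q))
    (hηC : ∀ x t, |η x t| ≤ C) (hqD : ∀ x t, |q x t| ≤ D)
    (hql : ∀ t, 0 < t → Tendsto (fun y ↦ q y t) (𝓝[<] x₀) (𝓝 (ql t)))
    (hqr : ∀ t, 0 < t → Tendsto (fun y ↦ q y t) (𝓝[>] x₀) (𝓝 (qr t)))
    (hψ : ContDiff ℝ 1 ψ) (hψc : HasCompactSupport ψ) (hψ0 : ∀ t, 0 ≤ ψ t)
    (hψz : ∀ t ≤ 0, ψ t = 0) :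
    0 ≤ ∫ t, ψ t * (ql t - qr t) := by
  let χ : ContDiffBump (0 : ℝ) := ⟨1, 2, one_pos, one_lt_two⟩
  have hχ : ContDiff ℝ 1 χ := χ.contDiff
  have hχ_zero : χ 0 = 1 :=
    χ.one_of_mem_closedBall (Metric.mem_closedBall_self χ.rIn_pos.le)
  have hχψ' : Integrable fun p : ℝ × ℝ ↦ χ p.1 * deriv ψ p.2 :=
    (χ.continuous.integrable_of_hasCompactSupport χ.hasCompactSupport).mul_prod
      ((hψ.continuous_deriv le_rfl).integrable_of_hasCompactSupport hψc.deriv)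
  have hχ'ψ : Integrable fun p : ℝ × ℝ ↦ deriv χ p.1 * ψ p.2 :=
    ((hχ.continuous_deriv le_rfl).integrable_of_hasCompactSupport
      χ.hasCompactSupport.deriv).mul_prod (hψ.continuous.integrable_of_hasCompactSupport hψc)
  have htime : Tendsto (fun ε : ℝ ↦
      ε * ∫ p : ℝ × ℝ, η (x₀ + ε * p.1) p.2 * (χ p.1 * deriv ψ p.2)) (𝓝[>] 0) (𝓝 0) := by
    refine (tendsto_id.mono_left nhdsWithin_le_nhds).zero_mul_isBoundedUnder_le
      (isBoundedUnder_of ⟨∫ p : ℝ × ℝ, C * ‖χ p.1 * deriv ψ p.2‖, fun ε ↦ ?_⟩)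
    exact norm_integral_le_of_norm_le (hχψ'.norm.const_mul C) (ae_of_all _ fun p ↦ by
      rw [norm_mul]; exact mul_le_mul_of_nonneg_right (hηC _ _) (norm_nonneg _))
  have hspace := tendsto_integral_rescale_mul_deriv hqm hqD hql hqr hχ χ.hasCompactSupport
    hψ.continuous hψc hψz
  have hlim := htime.add hspace
  rw [zero_add, hχ_zero, one_mul] at hlim
  refine ge_of_tendsto hlim ?_
  filter_upwards [self_mem_nhdsWithin] with ε (hε : 0 < ε)
  have hscale : Measurable fun p : ℝ × ℝ ↦ (x₀ + ε * p.1, p.2) := by fun_prop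
  rw [← integral_const_mul, ← integral_add]
  · exact h.integral_rescale_nonneg hχ χ.hasCompactSupport (fun _ ↦ χ.nonneg) hψ hψc hψ0 hψz hε
  · exact (hχψ'.bdd_mul (hηm.comp hscale).aestronglyMeasurable
      (ae_of_all _ fun p ↦ hηC _ _)).const_mul ε
  · exact hχ'ψ.bdd_mul (hqm.comp hscale).aestronglyMeasurable (ae_of_all _ fun p ↦ hqD _ _)

theorem HasNonposDivergence.trace_le (h : HasNonposDivergence η q)
    (hηm : Measurable (Function.uncurry η)) (hqm : Measurable (Function.uncurry q))
    (hηC : ∀ x t, |η x t| ≤ C) (hqD : ∀ x t, |q x t| ≤ D)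
    (hql : ∀ t, 0 < t → Tendsto (fun y ↦ q y t) (𝓝[<] x₀) (𝓝 (ql t)))
    (hqr : ∀ t, 0 < t → Tendsto (fun y ↦ q y t) (𝓝[>] x₀) (𝓝 (qr t))) :
    ∀ᵐ t ∂volume.restrict (Ioi 0), qr t ≤ ql t := by
  have hslice (x : ℝ) : AEStronglyMeasurable (q x) :=
    (hqm.comp measurable_prodMk_left).aestronglyMeasurable
  have hloc : LocallyIntegrable ((Ioi 0).indicator ql - (Ioi 0).indicator qr) :=
    (locallyIntegrable_indicator_of_tendsto measurableSet_Ioi hslice hqD hql).sub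
      (locallyIntegrable_indicator_of_tendsto measurableSet_Ioi hslice hqD hqr)
  rw [ae_restrict_iff' measurableSet_Ioi]
  have hae := ae_nonneg_of_forall_integral_contDiff_mul_nonneg
    (isOpen_Ioi (a := (0 : ℝ))) hloc fun ψ hψ hψc hψU hψ0 ↦ ?_
  · filter_upwards [hae] with t ht htpos
    simpa [indicator_of_mem htpos] using ht htpos
  have hψz (t : ℝ) (ht : t ≤ 0) : ψ t = 0 :=
    image_eq_zero_of_notMem_tsupport fun hmem ↦ (hψU hmem).not_ge ht
  refine (h.integral_mul_trace_sub_nonneg hηm hqm hηC hqD hql hqr (hψ.of_le (by simp)) hψc hψ0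
    hψz).trans_eq (integral_congr_ae (ae_of_all _ fun t ↦ ?_))
  rcases le_or_gt t 0 with ht | ht
  · simp [hψz t ht]
  · simp [ht]

end Traces

section Fluxes

variable {fl fr : ℝ → ℝ}

lemma measurable_dflux (hfl : Measurable fl) (hfr : Measurable fr) :
    Measurable (Function.uncurry (dflux fl fr)) :=
  Measurable.ite (measurableSet_lt measurable_fst measurable_const)
    (hfl.comp measurable_snd) (hfr.comp measurable_snd)

lemma exists_abs_dflux_le (hfl : Continuous fl) (hfr : Continuous fr) (M : ℝ) :
    ∃ C, ∀ x w, |w| ≤ M → |dflux fl fr x w| ≤ C := by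
  obtain ⟨Cl, hCl⟩ := isCompact_Icc.exists_bound_of_continuousOn
    (hfl.continuousOn (s := Icc (-M) M))
  obtain ⟨Cr, hCr⟩ := isCompact_Icc.exists_bound_of_continuousOn
    (hfr.continuousOn (s := Icc (-M) M))
  refine ⟨max Cl Cr, fun x w hw ↦ ?_⟩
  unfold dflux
  split_ifs
  · exact (hCl w (abs_le.1 hw)).trans (le_max_left _ _)
  · exact (hCr w (abs_le.1 hw)).trans (le_max_right _ _)

lemma measurable_cAB (A B : ℝ) : Measurable (cAB A B) :=
  Measurable.ite measurableSet_Iic measurable_const measurable_const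

lemma abs_cAB_le (A B x : ℝ) : |cAB A B x| ≤ max |A| |B| := by
  unfold cAB
  split_ifs <;> simp

/-- The Kružkov entropy flux `sgn(w - k) (g(w) - g(k))` of the flux `g` at level `k`. -/
def kruzkovFlux (g : ℝ → ℝ) (k w : ℝ) : ℝ := Real.sign (w - k) * (g w - g k)

lemma kruzkovFlux_of_le (g : ℝ → ℝ) {k w : ℝ} (h : w ≤ k) : kruzkovFlux g k w = g k - g w := by
  rcases h.eq_or_lt with rfl | h
  · simp [kruzkovFlux]
  · rw [kruzkovFlux, Real.sign_of_neg (sub_neg.2 h)]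
    ring

lemma kruzkovFlux_of_ge (g : ℝ → ℝ) {k w : ℝ} (h : k ≤ w) : kruzkovFlux g k w = g w - g k := by
  rcases h.eq_or_lt with rfl | h
  · simp [kruzkovFlux]
  · rw [kruzkovFlux, Real.sign_of_pos (sub_pos.2 h), one_mul]

lemma kruzkovFlux_eq_max_sub_min (g : ℝ → ℝ) (k w : ℝ) :
    kruzkovFlux g k w = g (max w k) - g (min w k) := by
  rcases le_total w k with h | h
  · rw [kruzkovFlux_of_le g h, max_eq_right h, min_eq_left h]
  · rw [kruzkovFlux_of_ge g h, max_eq_left h, min_eq_right h]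

lemma continuous_kruzkovFlux {g : ℝ → ℝ} (hg : Continuous g) (k : ℝ) :
    Continuous (kruzkovFlux g k) := by
  simp only [funext (kruzkovFlux_eq_max_sub_min g k)]
  fun_prop

lemma measurable_kruzkovFlux_dflux_cAB (hfl : Measurable fl) (hfr : Measurable fr) (A B : ℝ) :
    Measurable fun p : ℝ × ℝ ↦ kruzkovFlux (dflux fl fr p.1) (cAB A B p.1) p.2 := by
  have hc : Measurable fun p : ℝ × ℝ ↦ cAB A B p.1 := (measurable_cAB A B).comp measurable_fst
  simp only [kruzkovFlux_eq_max_sub_min]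
  exact ((measurable_dflux hfl hfr).comp (measurable_fst.prodMk (measurable_snd.max hc))).sub
    ((measurable_dflux hfl hfr).comp (measurable_fst.prodMk (measurable_snd.min hc)))

lemma exists_abs_kruzkovFlux_dflux_cAB_le (hfl : Continuous fl) (hfr : Continuous fr)
    (A B M : ℝ) :
    ∃ C, ∀ x w, |w| ≤ M → |kruzkovFlux (dflux fl fr x) (cAB A B x) w| ≤ C := by
  obtain ⟨C, hC⟩ := exists_abs_dflux_le hfl hfr (max M (max |A| |B|))
  refine ⟨C + C, fun x w hw ↦ ?_⟩
  have hw' : |w| ≤ max M (max |A| |B|) := hw.trans (le_max_left _ _)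
  have hc : |cAB A B x| ≤ max M (max |A| |B|) := (abs_cAB_le A B x).trans (le_max_right _ _)
  rcases le_total w (cAB A B x) with h | h
  · rw [kruzkovFlux_of_le _ h]
    exact (abs_sub _ _).trans (add_le_add (hC x _ hc) (hC x w hw'))
  · rw [kruzkovFlux_of_ge _ h]
    exact (abs_sub _ _).trans (add_le_add (hC x w hw') (hC x _ hc))

end Fluxes

section InterfaceTraces

variable {fl fr : ℝ → ℝ} {A B : ℝ} {u0 : ℝ → ℝ}

lemma ABSol.fl_um_eq_fr_up (sol : ABSol fl fr A B u0) (hfl : Continuous fl)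
    (hfr : Continuous fr) :
    ∀ᵐ t ∂volume.restrict (Ioi 0), fl (sol.um 0 t) = fr (sol.up 0 t) := by
  obtain ⟨M, hM⟩ := sol.bdd
  obtain ⟨C, hC⟩ := exists_abs_dflux_le hfl hfr M
  let q (x t : ℝ) : ℝ := dflux fl fr x (sol.u x t)
  have hqm : Measurable (Function.uncurry q) :=
    (measurable_dflux hfl.measurable hfr.measurable).comp (measurable_fst.prodMk sol.meas)
  have hqC (x t : ℝ) : |q x t| ≤ C := hC x _ (hM x t)
  have hql (t : ℝ) (ht : 0 < t) : Tendsto (fun y ↦ q y t) (𝓝[<] 0) (𝓝 (fl (sol.um 0 t))) :=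
    ((hfl.tendsto _).comp (sol.um_spec 0 t ht)).congr' <| by
      filter_upwards [self_mem_nhdsWithin] with y hy
      exact (if_pos hy).symm
  have hqr (t : ℝ) (ht : 0 < t) : Tendsto (fun y ↦ q y t) (𝓝[>] 0) (𝓝 (fr (sol.up 0 t))) :=
    ((hfr.tendsto _).comp (sol.up_spec 0 t ht)).congr' <| by
      filter_upwards [self_mem_nhdsWithin] with y hy
      exact (if_neg (not_lt_of_gt hy)).symm
  have hdiv : HasNonposDivergence sol.u q := fun φ hφ hφc _ hφz ↦ (sol.weak φ hφ hφc hφz).ge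
  have hdiv_neg : HasNonposDivergence (-sol.u) (-q) := fun φ hφ hφc _ hφz ↦ by
    simp only [Pi.neg_apply, neg_mul, ← neg_add]
    rw [integral_neg, sol.weak φ hφ hφc hφz, neg_zero]
  have hle := hdiv.trace_le sol.meas hqm hM hqC hql hqr
  have hge := hdiv_neg.trace_le sol.meas.neg hqm.neg (fun x t ↦ (abs_neg _).trans_le (hM x t))
    (fun x t ↦ (abs_neg _).trans_le (hqC x t)) (fun t ht ↦ (hql t ht).neg)
    (fun t ht ↦ (hqr t ht).neg)
  filter_upwards [hle, hge] with t hle hge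
  exact le_antisymm (neg_le_neg_iff.1 hge) hle

lemma ABSol.kruzkovFlux_up_le_kruzkovFlux_um (sol : ABSol fl fr A B u0) (hfl : Continuous fl)
    (hfr : Continuous fr) :
    ∀ᵐ t ∂volume.restrict (Ioi 0),
      kruzkovFlux fr B (sol.up 0 t) ≤ kruzkovFlux fl A (sol.um 0 t) := by
  obtain ⟨M, hM⟩ := sol.bdd
  obtain ⟨C, hC⟩ := exists_abs_kruzkovFlux_dflux_cAB_le hfl hfr A B M
  have hentropy : HasNonposDivergence (fun x t ↦ |sol.u x t - cAB A B x|)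
      (fun x t ↦ kruzkovFlux (dflux fl fr x) (cAB A B x) (sol.u x t)) := sol.interfaceEntropy
  refine hentropy.trace_le (C := M + max |A| |B|) (x₀ := 0)
    (sol.meas.sub ((measurable_cAB A B).comp measurable_fst)).abs
    ((measurable_kruzkovFlux_dflux_cAB hfl.measurable hfr.measurable A B).comp
      (measurable_fst.prodMk sol.meas)) (fun x t ↦ ?_) (fun x t ↦ hC x _ (hM x t))
    (fun t ht ↦ ?_) (fun t ht ↦ ?_)
  · rw [abs_abs]
    exact (abs_sub _ _).trans (add_le_add (hM x t) (abs_cAB_le A B x))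
  · refine (((continuous_kruzkovFlux hfl A).tendsto _).comp (sol.um_spec 0 t ht)).congr' ?_
    filter_upwards [self_mem_nhdsWithin] with y (hy : y < 0)
    simp [kruzkovFlux, dflux, cAB, hy, hy.le]
  · refine (((continuous_kruzkovFlux hfr B).tendsto _).comp (sol.up_spec 0 t ht)).congr' ?_
    filter_upwards [self_mem_nhdsWithin] with y (hy : 0 < y)
    simp [kruzkovFlux, dflux, cAB, hy.not_gt, hy.not_ge]

variable {p r : ℝ}

lemma le_of_kruzkovFlux_le (hfl : AntitoneOn fl (Iic A)) (hfr : MonotoneOn fr (Ici B))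
    (hAB : fl A = fr B) (hpr : fl p = fr r) (hle : kruzkovFlux fr B r ≤ kruzkovFlux fl A p) :
    fl A ≤ fl p := by
  by_contra! hlt
  have hAp : A ≤ p := le_of_not_ge fun hpA ↦ hlt.not_ge (hfl hpA self_mem_Iic hpA)
  have hrB : r ≤ B := le_of_not_ge fun hBr ↦
    (hpr ▸ hAB ▸ hlt).not_ge (hfr self_mem_Ici hBr hBr)
  rw [kruzkovFlux_of_le fr hrB, kruzkovFlux_of_ge fl hAp] at hle
  linarith

lemma eq_and_eq_of_kruzkovFlux_le {θl θr : ℝ} (hfl : StrictAntiOn fl (Iic θl))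
    (hfr : StrictMonoOn fr (Ici θr)) (hA : A ≤ θl) (hB : θr ≤ B) (hAB : fl A = fr B)
    (hpr : fl p = fr r) (hle : kruzkovFlux fr B r ≤ kruzkovFlux fl A p) (hp : p ≤ θl)
    (hr : θr ≤ r) :
    p = A ∧ r = B := by
  have hge : fl A ≤ fl p := le_of_kruzkovFlux_le
    (hfl.antitoneOn.mono (Iic_subset_Iic.2 hA)) (hfr.monotoneOn.mono (Ici_subset_Ici.2 hB))
    hAB hpr hle
  have hpA : p ≤ A := (hfl.le_iff_ge hA hp).1 hge
  have hBr : B ≤ r := (hfr.le_iff_le hB hr).1 (hAB ▸ hpr ▸ hge)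
  rw [kruzkovFlux_of_ge fr hBr, kruzkovFlux_of_le fl hpA] at hle
  have heq : fl p = fl A := by linarith
  exact ⟨hfl.injOn hp hA heq, hfr.injOn hr hB (hpr ▸ hAB ▸ heq)⟩

end InterfaceTraces

lemma strictAntiOn_Iic_of_strictMono_deriv {f : ℝ → ℝ} {θ : ℝ} (hf : Continuous f)
    (hf' : StrictMono (deriv f)) (hθ : deriv f θ ≤ 0) : StrictAntiOn f (Iic θ) :=
  strictAntiOn_of_deriv_neg (convex_Iic θ) hf.continuousOn fun x hx ↦ by
    rw [interior_Iic] at hx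
    exact (hf' hx).trans_le hθ

lemma strictMonoOn_Ici_of_strictMono_deriv {f : ℝ → ℝ} {θ : ℝ} (hf : Continuous f)
    (hf' : StrictMono (deriv f)) (hθ : 0 ≤ deriv f θ) : StrictMonoOn f (Ici θ) :=
  strictMonoOn_of_deriv_pos (convex_Ici θ) hf.continuousOn fun x hx ↦ by
    rw [interior_Ici] at hx
    exact hθ.trans_lt (hf' hx)

theorem interface_trace_conditions_general {θl θr A B : ℝ} {fl fr : ℝ → ℝ}
    (hfl : Continuous fl) (hfr : Continuous fr)
    (hfl_anti : StrictAntiOn fl (Iic θl)) (hfr_mono : StrictMonoOn fr (Ici θr))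
    (hA : A ≤ θl) (hB : θr ≤ B) (hAB : fl A = fr B)
    {u0 : ℝ → ℝ} (sol : ABSol fl fr A B u0) :
    ∀ᵐ t ∂(volume.restrict (Ioi (0:ℝ))),
      fl (sol.um 0 t) = fr (sol.up 0 t) ∧
      fl A ≤ fl (sol.um 0 t) ∧
      (sol.um 0 t ≤ θl → θr ≤ sol.up 0 t →
        sol.um 0 t = A ∧ sol.up 0 t = B) := by
  filter_upwards [sol.fl_um_eq_fr_up hfl hfr, sol.kruzkovFlux_up_le_kruzkovFlux_um hfl hfr]
    with t hRH hentropy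
  have hge : fl A ≤ fl (sol.um 0 t) := le_of_kruzkovFlux_le
    (hfl_anti.antitoneOn.mono (Iic_subset_Iic.2 hA))
    (hfr_mono.monotoneOn.mono (Ici_subset_Ici.2 hB)) hAB hRH hentropy
  exact ⟨hRH, hge, eq_and_eq_of_kruzkovFlux_le hfl_anti hfr_mono hA hB hAB hRH hentropy⟩

/-- interface conditions satisfied by the traces of an
AB-entropy solution at `x = 0`, for a.e. `t > 0` (Remark 2.3 of the paper). -/
theorem interface_trace_conditions
    {a θl θr A B : ℝ} {fl fr : ℝ → ℝ}
    (hflC : ContDiff ℝ 2 fl) (hfrC : ContDiff ℝ 2 fr)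
    (ha : 0 < a)
    (hfl2 : ∀ w : ℝ, a ≤ deriv (deriv fl) w)
    (hfr2 : ∀ w : ℝ, a ≤ deriv (deriv fr) w)
    (hf0 : fl 0 = fr 0) (hf1 : fl 1 = fr 1)
    (hθl : deriv fl θl = 0) (hθr : deriv fr θr = 0)
    (hθl0 : 0 ≤ θl) (hθr1 : θr ≤ 1)
    (hAB : fl A = fr B) (hA' : deriv fl A ≤ 0) (hB' : 0 ≤ deriv fr B)
    {u0 : ℝ → ℝ} (hu0 : IsLinf u0) (sol : ABSol fl fr A B u0) :
    ∀ᵐ t ∂(volume.restrict (Ioi (0:ℝ))),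
      fl (sol.um 0 t) = fr (sol.up 0 t) ∧
      fl A ≤ fl (sol.um 0 t) ∧
      (sol.um 0 t ≤ θl → θr ≤ sol.up 0 t →
        sol.um 0 t = A ∧ sol.up 0 t = B) := by
  have hfl' : StrictMono (deriv fl) := strictMono_of_deriv_pos fun w ↦ ha.trans_le (hfl2 w)
  have hfr' : StrictMono (deriv fr) := strictMono_of_deriv_pos fun w ↦ ha.trans_le (hfr2 w)
  exact interface_trace_conditions_general hflC.continuous hfrC.continuous
    (strictAntiOn_Iic_of_strictMono_deriv hflC.continuous hfl' hθl.le)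
    (strictMonoOn_Ici_of_strictMono_deriv hfrC.continuous hfr' hθr.ge)
    (hfl'.le_iff_le.1 (hA'.trans_eq hθl.symm)) (hfr'.le_iff_le.1 (hθr.trans_le hB')) hAB sol
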